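/- arXiv:2109.01623 — 2 statements merged into one kernel-verified Lean document; each statement's English description precedes it below -/
import Mathlib

section
/- For a feasible point x̄ of the MPCC the following are equivalent: (i) x̄ is linearized B-stationary; (ii) x̄ is A_α-stationary for all α ∈ {0,1}^p; (iii) x̄ is C_d-stationary for all d ∈ [0,1]^p; (iv) x̄ is P_α-stationary for all α ∈ {0,1}^p. -/
/-!
The linearized cone is the union, over `α ∈ {0,1}^p`, of polyhedral cones (branches), and the
`A_α` multiplier conditions describe exactly the polar of the branch belonging to `α`. Hence, by
Farkas' lemma (`farkas_sign`), linearized B-stationarity is the same as `A_α`-stationarity for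
all `α` (`aStat_of_linB`, `linB_of_aStat`).

The substantial implication is from `A_α` for all `α` to `C_d` (`cStat_of_aStat`). Weak
multipliers form a convex set, so the multipliers chosen for the `2 ^ p` vertices `α` of the cube
can be interpolated multilinearly to weak multipliers `(μ t, ν t)`, `t ∈ [0,1]^p`. On the face
`t i = 0` only vertices with `α i = 0` contribute, so `0 ≤ μ t i`; on the face `t i = 1`,
likewise `0 ≤ ν t i`. A `C¹` function measuring the violation of the `i`-th `C_d` condition
therefore has opposite signs on opposite faces, and the Poincaré–Miranda theorem
(`poincare_miranda`) yields a `t` at which all `p` conditions hold simultaneously. That theorem is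
deduced, for `C¹` maps, from the nonexistence of a `C¹` retraction of a ball onto its sphere
(`no_retraction`), which is proved analytically following Milnor and Rogers.

Finally, for `d = α` the `C_d` condition is the `P_α` condition, and `P_α` implies `A_α`.
-/

open Set Filter RealInnerProductSpace

noncomputable section

abbrev Rn (n : ℕ) := EuclideanSpace ℝ (Fin n)

/-- The tangent cone (Bouligand) to a set `F` at a point `x`. -/
def tangentCone' {n : ℕ} (F : Set (Rn n)) (x : Rn n) : Set (Rn n) :=
  {d | ∃ (xk : ℕ → Rn n) (tk : ℕ → ℝ),
    (∀ k, xk k ∈ F) ∧ (∀ k, 0 < tk k) ∧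
    Tendsto xk atTop (nhds x) ∧ Tendsto tk atTop (nhds 0) ∧
    Tendsto (fun k => (tk k)⁻¹ • (xk k - x)) atTop (nhds d)}

/-- The polar cone of a set. -/
def polarCone {n : ℕ} (C : Set (Rn n)) : Set (Rn n) :=
  {d | ∀ y ∈ C, ⟪d, y⟫ ≤ 0}

/-- α ∈ {0,1}^p -/
def IsBinaryVec {p : ℕ} (α : Fin p → ℝ) : Prop := ∀ i, α i = 0 ∨ α i = 1

/-- d ∈ [0,1]^p -/
def IsUnitIntervalVec {p : ℕ} (d : Fin p → ℝ) : Prop := ∀ i, d i ∈ Set.Icc (0:ℝ) 1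

variable {n l m p : ℕ}

/-- The feasible set of the MPCC. -/
def MpccFeasible (g : Fin l → Rn n → ℝ) (h : Fin m → Rn n → ℝ)
    (G H : Fin p → Rn n → ℝ) : Set (Rn n) :=
  {x | (∀ i, g i x ≤ 0) ∧ (∀ i, h i x = 0) ∧ (∀ i, 0 ≤ G i x) ∧ (∀ i, 0 ≤ H i x) ∧
    ∑ i, G i x * H i x = 0}

/-- The MPCC-linearized tangent cone at xb. -/
def MpccLinCone (g : Fin l → Rn n → ℝ) (h : Fin m → Rn n → ℝ)
    (G H : Fin p → Rn n → ℝ) (xb : Rn n) : Set (Rn n) :=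
  {d | (∀ i, g i xb = 0 → ⟪gradient (g i) xb, d⟫ ≤ 0) ∧
    (∀ i, ⟪gradient (h i) xb, d⟫ = 0) ∧
    (∀ i, G i xb = 0 → 0 < H i xb → ⟪gradient (G i) xb, d⟫ = 0) ∧
    (∀ i, 0 < G i xb → H i xb = 0 → ⟪gradient (H i) xb, d⟫ = 0) ∧
    (∀ i, G i xb = 0 → H i xb = 0 →
      0 ≤ ⟪gradient (G i) xb, d⟫ ∧ 0 ≤ ⟪gradient (H i) xb, d⟫ ∧
      ⟪gradient (G i) xb, d⟫ * ⟪gradient (H i) xb, d⟫ = 0)}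

/-- The weak stationarity system of the MPCC for given multipliers. -/
def MpccWeakMult (f : Rn n → ℝ) (g : Fin l → Rn n → ℝ) (h : Fin m → Rn n → ℝ)
    (G H : Fin p → Rn n → ℝ) (xb : Rn n)
    (lam : Fin l → ℝ) (eta : Fin m → ℝ) (mu nu : Fin p → ℝ) : Prop :=
  gradient f xb + ∑ i, lam i • gradient (g i) xb + ∑ i, eta i • gradient (h i) xb
    - ∑ i, mu i • gradient (G i) xb - ∑ i, nu i • gradient (H i) xb = 0 ∧
  (∀ i, g i xb = 0 → 0 ≤ lam i) ∧ (∀ i, g i xb ≠ 0 → lam i = 0) ∧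
  (∀ i, 0 < G i xb → H i xb = 0 → mu i = 0) ∧
  (∀ i, G i xb = 0 → 0 < H i xb → nu i = 0)

/-- A_α-stationarity for the MPCC. -/
def MpccAStat (f : Rn n → ℝ) (g : Fin l → Rn n → ℝ) (h : Fin m → Rn n → ℝ)
    (G H : Fin p → Rn n → ℝ) (xb : Rn n) (α : Fin p → ℝ) : Prop :=
  ∃ lam eta mu nu, MpccWeakMult f g h G H xb lam eta mu nu ∧
    (∀ i, G i xb = 0 → H i xb = 0 → α i = 0 → 0 ≤ mu i) ∧
    (∀ i, G i xb = 0 → H i xb = 0 → α i = 1 → 0 ≤ nu i)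

/-- P_α-stationarity for the MPCC. -/
def MpccPStat (f : Rn n → ℝ) (g : Fin l → Rn n → ℝ) (h : Fin m → Rn n → ℝ)
    (G H : Fin p → Rn n → ℝ) (xb : Rn n) (α : Fin p → ℝ) : Prop :=
  ∃ lam eta mu nu, MpccWeakMult f g h G H xb lam eta mu nu ∧
    (∀ i, G i xb = 0 → H i xb = 0 → α i = 0 → (0 ≤ mu i ∧ 0 ≤ nu i) ∨ mu i = 0) ∧
    (∀ i, G i xb = 0 → H i xb = 0 → α i = 1 → (0 ≤ mu i ∧ 0 ≤ nu i) ∨ nu i = 0)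

/-- C_d-stationarity for the MPCC. -/
def MpccCStat (f : Rn n → ℝ) (g : Fin l → Rn n → ℝ) (h : Fin m → Rn n → ℝ)
    (G H : Fin p → Rn n → ℝ) (xb : Rn n) (d : Fin p → ℝ) : Prop :=
  ∃ lam eta mu nu, MpccWeakMult f g h G H xb lam eta mu nu ∧
    (∀ i, G i xb = 0 → H i xb = 0 →
      (0 ≤ mu i ∧ 0 ≤ nu i) ∨ (1 - d i) * mu i = d i * nu i)

/-- M-stationarity for the MPCC. -/
def MpccMStat (f : Rn n → ℝ) (g : Fin l → Rn n → ℝ) (h : Fin m → Rn n → ℝ)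
    (G H : Fin p → Rn n → ℝ) (xb : Rn n) : Prop :=
  ∃ lam eta mu nu, MpccWeakMult f g h G H xb lam eta mu nu ∧
    (∀ i, G i xb = 0 → H i xb = 0 → (0 ≤ mu i ∧ 0 ≤ nu i) ∨ mu i * nu i = 0)

/-- The standard linearization cone of the branch problem NLP(α) at xb. -/
def MpccNlpLinCone (g : Fin l → Rn n → ℝ) (h : Fin m → Rn n → ℝ)
    (G H : Fin p → Rn n → ℝ) (xb : Rn n) (α : Fin p → ℝ) : Set (Rn n) :=
  {d | (∀ i, g i xb = 0 → ⟪gradient (g i) xb, d⟫ ≤ 0) ∧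
    (∀ i, ⟪gradient (h i) xb, d⟫ = 0) ∧
    (∀ i, 0 < G i xb → H i xb = 0 → ⟪gradient (H i) xb, d⟫ = 0) ∧
    (∀ i, G i xb = 0 → H i xb = 0 → α i = 0 →
      ⟪gradient (H i) xb, d⟫ = 0 ∧ 0 ≤ ⟪gradient (G i) xb, d⟫) ∧
    (∀ i, G i xb = 0 → 0 < H i xb → ⟪gradient (G i) xb, d⟫ = 0) ∧
    (∀ i, G i xb = 0 → H i xb = 0 → α i = 1 →
      ⟪gradient (G i) xb, d⟫ = 0 ∧ 0 ≤ ⟪gradient (H i) xb, d⟫)}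


/-! ### Farkas' lemma -/

/-- Farkas' lemma for finitely many linear functionals, in the algebraic form: a functional that is
nonpositive on the cone cut out by the `a i` is a nonnegative combination of them. Induction on the
number of functionals: if `a 0` cannot be dropped, there is a point `x₁` on which it is positive, and
all functionals are projected along `x₁` onto its kernel. -/
lemma farkas_fin {V : Type*} [AddCommGroup V] [Module ℝ V] (k : ℕ) :
    ∀ (a : Fin k → V →ₗ[ℝ] ℝ) (b : V →ₗ[ℝ] ℝ),
      (∀ x, (∀ i, a i x ≤ 0) → b x ≤ 0) →
      ∃ c : Fin k → ℝ, (∀ i, 0 ≤ c i) ∧ ∀ x, b x = ∑ i, c i * a i x := by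
  induction k with
  | zero =>
    intro a b hb
    refine ⟨fun _ => 0, fun _ => le_rfl, fun x => ?_⟩
    have h1 := hb x (fun i => i.elim0)
    have h2 := hb (-x) (fun i => i.elim0)
    rw [map_neg] at h2
    simp only [Finset.univ_eq_empty, Finset.sum_empty]
    linarith
  | succ k ih =>
    intro a b hb
    by_cases hlast : ∀ x, (∀ i : Fin k, a i.succ x ≤ 0) → b x ≤ 0
    · obtain ⟨c, hc, hbc⟩ := ih (fun i => a i.succ) b hlast
      refine ⟨Fin.cons 0 c, fun i => ?_, fun x => ?_⟩
      · refine Fin.cases ?_ (fun j => ?_) i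
        · simp
        · simpa using hc j
      · rw [Fin.sum_univ_succ]
        simpa using hbc x
    · push Not at hlast
      obtain ⟨x₁, hx₁, hbx₁⟩ := hlast
      have hpos : 0 < a 0 x₁ := by
        by_contra hcon
        push Not at hcon
        exact absurd (hb x₁ (fun i => Fin.cases hcon hx₁ i)) (not_le.mpr hbx₁)
      set s : ℝ := a 0 x₁ with hs
      obtain ⟨c, hc, hbc⟩ := ih (fun i => a i.succ - (a i.succ x₁ / s) • a 0)
        (b - (b x₁ / s) • a 0) (by
          intro x hx
          have key := hb (x - (a 0 x / s) • x₁) (by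
            intro i
            refine Fin.cases ?_ (fun j => ?_) i
            · rw [map_sub, map_smul, smul_eq_mul, ← hs, div_mul_cancel₀ _ hpos.ne', sub_self]
            · have := hx j
              simp only [LinearMap.sub_apply, LinearMap.smul_apply, smul_eq_mul] at this
              rw [map_sub, map_smul, smul_eq_mul]
              calc _ = a j.succ x - a j.succ x₁ / s * a 0 x := by ring
                _ ≤ 0 := this)
          rw [map_sub, map_smul, smul_eq_mul] at key
          simp only [LinearMap.sub_apply, LinearMap.smul_apply, smul_eq_mul]
          calc _ = b x - a 0 x / s * b x₁ := by ring
            _ ≤ 0 := key)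
      refine ⟨Fin.cons (b x₁ / s - ∑ i, c i * (a i.succ x₁ / s)) c, fun i => ?_, fun x => ?_⟩
      · refine Fin.cases ?_ (fun j => ?_) i
        · have h1 : ∑ i, c i * (a i.succ x₁ / s) ≤ 0 := Finset.sum_nonpos fun i _ =>
            mul_nonpos_of_nonneg_of_nonpos (hc i) (div_nonpos_of_nonpos_of_nonneg (hx₁ i) hpos.le)
          have h2 : 0 < b x₁ / s := div_pos hbx₁ hpos
          simp only [Fin.cons_zero]
          linarith
        · simpa using hc j
      · rw [Fin.sum_univ_succ]
        have := hbc x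
        simp only [LinearMap.sub_apply, LinearMap.smul_apply, smul_eq_mul, mul_sub,
          Finset.sum_sub_distrib] at this
        simp only [Fin.cons_zero, Fin.cons_succ, sub_mul, Finset.sum_mul]
        have e : ∑ i, c i * (a i.succ x₁ / s) * a 0 x = ∑ i, c i * (a i.succ x₁ / s * a 0 x) :=
          Finset.sum_congr rfl fun i _ => by ring
        rw [e]
        linarith

/-- Farkas' lemma with prescribed multiplier signs. `P i` asks for `0 ≤ c i` and `Q i` for
`c i ≤ 0`; a free multiplier (neither) corresponds to an equality constraint on `x`, a vanishing
one (both) to no constraint at all. -/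
lemma farkas_sign {n : ℕ} {ι : Type*} [Fintype ι] (a : ι → Rn n) (b : Rn n) (P Q : ι → Prop)
    (hb : ∀ x, (∀ i, ¬ Q i → ⟪a i, x⟫ ≤ 0) → (∀ i, ¬ P i → 0 ≤ ⟪a i, x⟫) → ⟪b, x⟫ ≤ 0) :
    ∃ c : ι → ℝ, (∀ i, P i → 0 ≤ c i) ∧ (∀ i, Q i → c i ≤ 0) ∧ b = ∑ i, c i • a i := by
  classical
  let v : ι ⊕ ι → Rn n :=
    Sum.elim (fun i => if Q i then 0 else a i) (fun i => if P i then 0 else - a i)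
  let e := Fintype.equivFin (ι ⊕ ι)
  obtain ⟨c, hc, hbc⟩ := farkas_fin (V := Rn n) (Fintype.card (ι ⊕ ι))
    (fun j => (innerₗ (Rn n)) (v (e.symm j))) ((innerₗ (Rn n)) b) (by
      intro x hx
      have hx' : ∀ j : ι ⊕ ι, ⟪v j, x⟫ ≤ 0 := fun j => by simpa using hx (e j)
      refine hb x (fun i hi => ?_) (fun i hi => ?_)
      · simpa [v, hi] using hx' (Sum.inl i)
      · simpa [v, hi] using hx' (Sum.inr i))
  refine ⟨fun i => (if Q i then 0 else c (e (Sum.inl i))) - (if P i then 0 else c (e (Sum.inr i))),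
    fun i hi => ?_, fun i hi => ?_, ?_⟩
  · simp only [hi, if_true, sub_zero]
    split_ifs
    exacts [le_rfl, hc _]
  · simp only [hi, if_true, zero_sub]
    split_ifs
    exacts [by simp, neg_nonpos.mpr (hc _)]
  · refine ext_inner_right ℝ fun x => ?_
    have h1 := hbc x
    rw [← Equiv.sum_comp e, Fintype.sum_sum_type] at h1
    simp only [innerₗ_apply_apply, Equiv.symm_apply_apply] at h1
    rw [h1, sum_inner, ← Finset.sum_add_distrib]
    refine Finset.sum_congr rfl fun i _ => ?_
    simp only [v, Sum.elim_inl, Sum.elim_inr, real_inner_smul_left]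
    split_ifs <;> (simp [inner_neg_left, sub_mul]; try ring)

/-! ### No `C¹` retraction of the ball onto the sphere -/

/-- Since `t ↦ det (1 + t A)` is a polynomial of degree at most `p`, its value at `1` is a fixed
linear combination (independent of `A`) of its values at `p + 1` nodes in `(0, ε)`. -/
lemma det_interp (p : ℕ) {ε : ℝ} (hε : 0 < ε) :
    ∃ (t w : Fin (p + 1) → ℝ), (∀ j, t j ∈ Ioo 0 ε) ∧
      ∀ A : Rn p →L[ℝ] Rn p, (1 + A).det = ∑ j, w j * (1 + t j • A).det := by
  let t : Fin (p + 1) → ℝ := fun j => ε * (((j : ℕ) + 1 : ℝ) / (p + 2))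
  have ht : Set.InjOn t (Finset.univ : Finset (Fin (p + 1))) := by
    intro i _ j _ hij
    have h2 : (p : ℝ) + 2 ≠ 0 := by positivity
    have h1 : ((i : ℕ) + 1 : ℝ) / (p + 2) = ((j : ℕ) + 1 : ℝ) / (p + 2) :=
      mul_left_cancel₀ hε.ne' hij
    rw [div_left_inj' h2, add_left_inj] at h1
    exact Fin.ext (by exact_mod_cast h1)
  refine ⟨t, fun j => (Lagrange.basis Finset.univ t j).eval 1, fun j => ⟨by positivity, ?_⟩,
    fun A => ?_⟩
  · have h3 : ((j : ℕ) : ℝ) + 1 ≤ p + 1 := by exact_mod_cast j.2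
    have : ((j : ℕ) + 1 : ℝ) / (p + 2) < 1 := by
      rw [div_lt_one (by positivity)]
      linarith
    exact mul_lt_of_lt_one_right hε this
  · let b := (EuclideanSpace.basisFun (Fin p) ℝ).toBasis
    let M := LinearMap.toMatrix b b A.toLinearMap
    let q : Polynomial ℝ :=
      ((Polynomial.X : Polynomial ℝ) • M.map (Polynomial.C (R := ℝ)) +
        (1 : Matrix (Fin p) (Fin p) ℝ).map (Polynomial.C (R := ℝ))).det
    have hq : ∀ s : ℝ, q.eval s = (1 + s • A).det := by
      intro s
      have h1 : q.eval s = (s • M + 1).det := by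
        rw [← Polynomial.coe_evalRingHom, RingHom.map_det]
        congr 1
        ext i j
        by_cases hij : i = j <;> (simp [hij]; ring)
      have h2 : LinearMap.toMatrix b b ((1 + s • A : Rn p →L[ℝ] Rn p)).toLinearMap = s • M + 1 := by
        simp only [M]
        rw [ContinuousLinearMap.toLinearMap_add, ContinuousLinearMap.toLinearMap_smul, map_add,
          map_smul, add_comm]
        congr 1
        exact LinearMap.toMatrix_one b
      rw [h1, ← h2, LinearMap.det_toMatrix]
    have hdeg : q.degree < (Finset.univ : Finset (Fin (p + 1))).card := by
      refine lt_of_le_of_lt Polynomial.degree_le_natDegree ?_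
      have := Polynomial.natDegree_det_X_add_C_le M (1 : Matrix (Fin p) (Fin p) ℝ)
      simp only [Fintype.card_fin] at this
      rw [Finset.card_univ, Fintype.card_fin]
      exact_mod_cast Nat.lt_succ_of_le this
    have h1 := congrArg (Polynomial.eval 1) (Lagrange.eq_interpolate ht hdeg)
    rw [Lagrange.interpolate_apply, Polynomial.eval_finsetSum, hq, one_smul] at h1
    rw [h1]
    refine Finset.sum_congr rfl fun j _ => ?_
    rw [Polynomial.eval_mul, Polynomial.eval_C, hq, mul_comm]

/-- A Lipschitz map on a closed ball that vanishes on the sphere stays Lipschitz, with the same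
constant, when extended by zero. -/
lemma lipschitz_extend_zero {E : Type*} [NormedAddCommGroup E] [NormedSpace ℝ E] {R K : ℝ}
    (hK : 0 ≤ K) (k : E → E)
    (hk : ∀ x y, ‖x‖ ≤ R → ‖y‖ ≤ R → ‖k x - k y‖ ≤ K * ‖x - y‖)
    (hk0 : ∀ x, ‖x‖ = R → k x = 0) (x y : E) :
    ‖(Metric.closedBall (0 : E) R).indicator k x - (Metric.closedBall (0 : E) R).indicator k y‖
      ≤ K * ‖x - y‖ := by
  -- a point inside and a point outside are compared through a point of the sphere between them
  have mixed : ∀ x y : E, ‖x‖ ≤ R → R < ‖y‖ → ‖k x‖ ≤ K * ‖x - y‖ := by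
    intro x y hx hy
    have hc : ContinuousOn (fun t : ℝ => ‖x + t • (y - x)‖) (Icc 0 1) := by fun_prop
    obtain ⟨t, ht, hz⟩ := intermediate_value_Icc zero_le_one hc
      (show R ∈ Icc _ _ by simpa using ⟨hx, hy.le⟩)
    have h1 := hk x (x + t • (y - x)) hx hz.le
    rw [hk0 _ hz, sub_zero, sub_add_cancel_left, norm_neg, norm_smul, Real.norm_eq_abs,
      abs_of_nonneg ht.1, norm_sub_rev] at h1
    refine h1.trans (mul_le_mul_of_nonneg_left ?_ hK)
    exact mul_le_of_le_one_left (norm_nonneg _) ht.2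
  by_cases hx : ‖x‖ ≤ R <;> by_cases hy : ‖y‖ ≤ R
  · rw [indicator_of_mem (by simpa using hx), indicator_of_mem (by simpa using hy)]
    exact hk x y hx hy
  · rw [indicator_of_mem (by simpa using hx), indicator_of_notMem (by simpa using hy), sub_zero]
    exact mixed x y hx (not_le.mp hy)
  · rw [indicator_of_notMem (by simpa using hx), indicator_of_mem (by simpa using hy), zero_sub,
      norm_neg, norm_sub_rev]
    exact mixed y x hy (not_le.mp hx)
  · rw [indicator_of_notMem (by simpa using hx), indicator_of_notMem (by simpa using hy), sub_zero,
      norm_zero]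
    positivity

/-- If `k` is `K`-Lipschitz on the ball and vanishes on the sphere, then `x ↦ x + t k x` is, for
`t K < 1`, a bijection of the ball: Banach's fixed point theorem applied to `x ↦ y - t k x`. -/
lemma perturb_image {E : Type*} [NormedAddCommGroup E] [NormedSpace ℝ E] [CompleteSpace E]
    {R K t : ℝ} (hK : 0 ≤ K) (ht0 : 0 ≤ t) (htK : t * K < 1) (k : E → E)
    (hk : ∀ x y, ‖x‖ ≤ R → ‖y‖ ≤ R → ‖k x - k y‖ ≤ K * ‖x - y‖)
    (hk0 : ∀ x, ‖x‖ = R → k x = 0) (hmaps : ∀ x, ‖x‖ ≤ R → ‖x + t • k x‖ ≤ R) :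
    Set.InjOn (fun x => x + t • k x) (Metric.closedBall 0 R) ∧
      (fun x => x + t • k x) '' Metric.closedBall 0 R = Metric.closedBall 0 R := by
  constructor
  · intro x hx y hy hxy
    simp only [mem_closedBall_zero_iff] at hx hy
    simp only at hxy
    have h1 : x - y = - (t • (k x - k y)) := by
      rw [smul_sub, ← sub_eq_zero]
      rw [← sub_eq_zero] at hxy
      rw [← hxy]
      abel
    have h2 : ‖x - y‖ ≤ t * K * ‖x - y‖ := by
      calc ‖x - y‖ = t * ‖k x - k y‖ := by
            rw [h1, norm_neg, norm_smul, Real.norm_of_nonneg ht0]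
        _ ≤ t * (K * ‖x - y‖) := mul_le_mul_of_nonneg_left (hk x y hx hy) ht0
        _ = _ := by ring
    have h3 : ‖x - y‖ = 0 := by nlinarith [norm_nonneg (x - y)]
    exact sub_eq_zero.mp (norm_eq_zero.mp h3)
  · refine Subset.antisymm ?_ fun y hy => ?_
    · rintro _ ⟨x, hx, rfl⟩
      simpa using hmaps x (by simpa using hx)
    · let kk := (Metric.closedBall (0 : E) R).indicator k
      have hcon : ContractingWith (t * K).toNNReal (fun x => y - t • kk x) := by
        refine ⟨by simpa using htK, LipschitzWith.of_dist_le_mul fun a b => ?_⟩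
        rw [dist_eq_norm, dist_eq_norm, sub_sub_sub_cancel_left, ← smul_sub, norm_smul,
          Real.norm_of_nonneg ht0, norm_sub_rev, norm_sub_rev a b]
        calc t * ‖kk a - kk b‖ ≤ t * (K * ‖a - b‖) :=
              mul_le_mul_of_nonneg_left (lipschitz_extend_zero hK k hk hk0 a b) ht0
          _ = _ := by rw [Real.coe_toNNReal _ (by positivity), norm_sub_rev, mul_assoc]
      obtain ⟨x, hx, -⟩ := hcon.exists_fixedPoint 0 (edist_ne_top _ _)
      have hx' : y - t • kk x = x := hx
      have hxR : x ∈ Metric.closedBall (0 : E) R := by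
        by_contra hcn
        have : kk x = 0 := indicator_of_notMem hcn k
        rw [this, smul_zero, sub_zero] at hx'
        exact hcn (hx' ▸ hy)
      refine ⟨x, hxR, ?_⟩
      have : kk x = k x := indicator_of_mem hxR k
      rw [this] at hx'
      simp only
      nth_rewrite 1 [← hx']
      abel

/-- There is no `C¹` retraction of a ball onto its sphere (Milnor, Rogers). With `k = r - id`, the
maps `id + t k` are bijections of the ball for small `t`, so the integral of `det (1 + t k')` is
the volume of the ball; being polynomial in `t`, it is so at `t = 1` as well, where however
`det r'` vanishes because `r` takes values in the sphere. -/
lemma no_retraction {p : ℕ} {R : ℝ} (hR : 0 < R) (r : Rn p → Rn p)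
    (hr : ∀ x, ‖x‖ ≤ R → ContDiffAt ℝ 1 r x) (hid : ∀ x, ‖x‖ = R → r x = x)
    (hn : ∀ x, ‖x‖ ≤ R → ‖r x‖ = R) : False := by
  set B : Set (Rn p) := Metric.closedBall 0 R with hB
  have hBc : IsCompact B := isCompact_closedBall 0 R
  have memB : ∀ x, x ∈ B ↔ ‖x‖ ≤ R := fun x => mem_closedBall_zero_iff
  let k : Rn p → Rn p := fun x => r x - x
  have hkd : ∀ x ∈ B, ContDiffAt ℝ 1 k x := fun x hx =>
    (hr x ((memB x).mp hx)).sub contDiffAt_id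
  have hkdiff : ∀ x ∈ B, DifferentiableAt ℝ k x := fun x hx =>
    (hkd x hx).differentiableAt one_ne_zero
  have hk'c : ContinuousOn (fderiv ℝ k) B := fun x hx =>
    ((hkd x hx).fderiv_right (m := 0) (by simp)).continuousAt.continuousWithinAt
  obtain ⟨K, hKb⟩ := hBc.exists_bound_of_continuousOn hk'c
  have hK : 0 ≤ K := (norm_nonneg _).trans (hKb 0 (by simp [memB, hR.le]))
  have hlip : ∀ x y, ‖x‖ ≤ R → ‖y‖ ≤ R → ‖k x - k y‖ ≤ K * ‖x - y‖ := fun x y hx hy =>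
    (convex_closedBall (0 : Rn p) R).norm_image_sub_le_of_norm_fderiv_le hkdiff hKb
      ((memB y).mpr hy) ((memB x).mpr hx)
  have hk0 : ∀ x, ‖x‖ = R → k x = 0 := fun x hx => by simp [k, hid x hx]
  -- the determinant is positive near the identity
  obtain ⟨δ, hδ, hdet⟩ : ∃ δ > 0, ∀ A : Rn p →L[ℝ] Rn p, ‖A‖ < δ → 0 < (1 + A).det := by
    have hc : Continuous fun A : Rn p →L[ℝ] Rn p => (1 + A).det :=
      ContinuousLinearMap.continuous_det.comp (by fun_prop)
    have h0 : (0 : ℝ) < (1 + (0 : Rn p →L[ℝ] Rn p)).det := by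
      rw [add_zero]
      have : (1 : Rn p →L[ℝ] Rn p).det = 1 := LinearMap.det_id
      rw [this]; exact one_pos
    obtain ⟨δ, hδ, h⟩ := Metric.eventually_nhds_iff.mp (hc.continuousAt.eventually_const_lt h0)
    exact ⟨δ, hδ, fun A hA => h (by simpa using hA)⟩
  obtain ⟨ε, hε, hε1, hεK, hεδ⟩ : ∃ ε > 0, ε ≤ 1 ∧ ε * K < 1 ∧ ε * K < δ := by
    refine ⟨min 1 (min 1 δ / (K + 1)) , ?_, min_le_left _ _, ?_⟩
    · have : 0 < min 1 δ := lt_min one_pos hδ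
      positivity
    · have h1 : 0 < min 1 δ := lt_min one_pos hδ
      have h2 : min 1 (min 1 δ / (K + 1)) * K < min 1 δ := by
        calc _ ≤ (min 1 δ / (K + 1)) * K := mul_le_mul_of_nonneg_right (min_le_right _ _) hK
          _ < (min 1 δ / (K + 1)) * (K + 1) := by
            apply mul_lt_mul_of_pos_left (by linarith); positivity
          _ = _ := div_mul_cancel₀ _ (by positivity)
      exact ⟨h2.trans_le (min_le_left _ _), h2.trans_le (min_le_right _ _)⟩
  have hvol : ∀ t ∈ Ioo 0 ε, ∫ x in B, (1 + t • fderiv ℝ k x).det = MeasureTheory.volume.real B := by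
    intro t ht
    have htK : t * K ≤ ε * K := mul_le_mul_of_nonneg_right ht.2.le hK
    obtain ⟨hinj, himg⟩ := perturb_image hK ht.1.le (htK.trans_lt hεK) k hlip hk0 (by
      intro x hx
      have e : x + t • k x = (1 - t) • x + t • r x := by
        simp only [k, smul_sub, sub_smul, one_smul]; abel
      rw [e]
      have h1 : 0 ≤ 1 - t := by linarith [ht.2]
      calc _ ≤ ‖(1 - t) • x‖ + ‖t • r x‖ := norm_add_le _ _
        _ = (1 - t) * ‖x‖ + t * R := by
          rw [norm_smul, norm_smul, Real.norm_of_nonneg h1, Real.norm_of_nonneg ht.1.le, hn x hx]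
        _ ≤ (1 - t) * R + t * R := by gcongr
        _ = R := by ring)
    have hcv := MeasureTheory.integral_image_eq_integral_abs_det_fderiv_smul
      MeasureTheory.volume (s := B) (f := fun x => x + t • k x)
      (f' := fun x => 1 + t • fderiv ℝ k x) Metric.isClosed_closedBall.measurableSet
      (fun x hx => by
        have := (hasFDerivAt_id (𝕜 := ℝ) x).add ((hkdiff x hx).hasFDerivAt.const_smul t)
        exact this.hasFDerivWithinAt) hinj (fun _ => (1 : ℝ))
    rw [himg] at hcv
    simp only [MeasureTheory.integral_const, smul_eq_mul, mul_one,
      MeasureTheory.measureReal_restrict_apply_univ] at hcv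
    rw [hB, hcv]
    refine MeasureTheory.setIntegral_congr_fun Metric.isClosed_closedBall.measurableSet
      fun x hx => ?_
    refine (abs_of_pos (hdet _ ?_)).symm
    rw [norm_smul, Real.norm_of_nonneg ht.1.le]
    exact (mul_le_mul_of_nonneg_left (hKb x hx) ht.1.le).trans_lt (htK.trans_lt hεδ)
  obtain ⟨t, w, ht, hw⟩ := det_interp p hε
  have h_integrable : ∀ s : ℝ, MeasureTheory.IntegrableOn (fun x => (1 + s • fderiv ℝ k x).det) B := by
    intro s
    refine ContinuousOn.integrableOn_compact hBc ?_
    exact ContinuousLinearMap.continuous_det.comp_continuousOn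
      (continuousOn_const.add (hk'c.const_smul s))
  have hwsum : ∑ j, w j = 1 := by
    have h1 := hw 0
    have : (1 : Rn p →L[ℝ] Rn p).det = 1 := LinearMap.det_id
    rw [add_zero, this] at h1
    rw [h1]
    refine Finset.sum_congr rfl fun j _ => ?_
    have h2 : t j • (0 : Rn p →L[ℝ] Rn p) = 0 :=
      ContinuousLinearMap.ext fun v => by simp
    rw [h2, add_zero, this, mul_one]
  have htotal : ∫ x in B, (1 + fderiv ℝ k x).det = MeasureTheory.volume.real B := by
    rw [funext fun x => hw (fderiv ℝ k x)]
    rw [MeasureTheory.integral_finsetSum _ fun j _ => (h_integrable (t j)).const_mul (w j)]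
    simp_rw [MeasureTheory.integral_const_mul]
    rw [Finset.sum_congr rfl fun j _ => by rw [hvol _ (ht j)], ← Finset.sum_mul, hwsum, one_mul]
  have hzero : ∀ x ∈ Metric.ball (0 : Rn p) R, (1 + fderiv ℝ k x).det = 0 := by
    intro x hx
    have hxR : ‖x‖ < R := by simpa using hx
    have hrd : HasFDerivAt r (1 + fderiv ℝ k x) x := by
      have h1 := (hasFDerivAt_id (𝕜 := ℝ) x).add (hkdiff x ((memB x).mpr hxR.le)).hasFDerivAt
      refine h1.congr_of_eventuallyEq (Filter.Eventually.of_forall fun y => ?_)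
      simp [k]
    set A := 1 + fderiv ℝ k x
    have hperp : ∀ v, ⟪r x, A v⟫ = 0 := by
      intro v
      have h1 := hrd.inner ℝ hrd
      have h2 : (fun y => ⟪r y, r y⟫) =ᶠ[nhds x] fun _ => R ^ 2 := by
        filter_upwards [Metric.isOpen_ball.mem_nhds hx] with y hy
        rw [real_inner_self_eq_norm_sq, hn y (by simpa using (le_of_lt (by simpa using hy)))]
      have h3 := h1.unique ((hasFDerivAt_const (R ^ 2) x).congr_of_eventuallyEq h2)
      have h4 := congrArg (fun L => L v) h3
      simp [fderivInnerCLM_apply, real_inner_comm] at h4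
      exact h4
    by_contra hne
    have hsurj : Function.Surjective A :=
      (LinearMap.equivOfDetNeZero A.toLinearMap hne).surjective
    obtain ⟨v, hv⟩ := hsurj (r x)
    have h1 := hperp v
    rw [hv, real_inner_self_eq_norm_sq, hn x hxR.le] at h1
    exact absurd h1 (by positivity)
  have hne : Nontrivial (Rn p) := ⟨r 0, 0, fun h0 => by
    have := hn 0 (by simpa using hR.le)
    rw [h0, norm_zero] at this
    exact hR.ne this⟩
  have hballs : Metric.ball (0 : Rn p) R =ᵐ[MeasureTheory.volume] B := by
    rw [hB, ← Metric.ball_union_sphere]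
    refine (MeasureTheory.union_ae_eq_left_of_ae_eq_empty ?_).symm
    exact MeasureTheory.ae_eq_empty.mpr (MeasureTheory.Measure.addHaar_sphere _ _ _)
  rw [← MeasureTheory.setIntegral_congr_set hballs,
    MeasureTheory.setIntegral_congr_fun Metric.isOpen_ball.measurableSet hzero] at htotal
  have hpos : 0 < MeasureTheory.volume.real B := by
    refine ENNReal.toReal_pos (Metric.measure_closedBall_pos _ _ hR).ne' ?_
    exact hBc.measure_lt_top.ne
  simp at htotal
  linarith

/-! ### The Poincaré–Miranda theorem -/

/-- A `C¹` vector field pointing inwards along a sphere has a zero. Otherwise, following the ray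
from `x` in direction `-V x` up to the sphere would be a `C¹` retraction of the ball; the exit time
is the larger root of a quadratic equation. -/
lemma exists_zero_of_inward {p : ℕ} {R : ℝ} (hR : 0 < R) (V : Rn p → Rn p) (hV : ContDiff ℝ 1 V)
    (hin : ∀ x, ‖x‖ = R → ⟪V x, x⟫ < 0) : ∃ x, V x = 0 := by
  by_contra hcon
  push Not at hcon
  let D : Rn p → ℝ := fun x => ⟪V x, x⟫ ^ 2 + ‖V x‖ ^ 2 * (R ^ 2 - ‖x‖ ^ 2)
  let τ : Rn p → ℝ := fun x => (⟪V x, x⟫ + √(D x)) / ‖V x‖ ^ 2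
  have ha : ∀ x, 0 < ‖V x‖ ^ 2 := fun x => by
    have := norm_pos_iff.mpr (hcon x)
    positivity
  have hD : ∀ x, ‖x‖ ≤ R → 0 < D x := by
    intro x hx
    rcases hx.lt_or_eq with h | h
    · have : 0 < R ^ 2 - ‖x‖ ^ 2 := by nlinarith [norm_nonneg x]
      have := mul_pos (ha x) this
      simp only [D]
      positivity
    · have := (hin x h).ne
      simp only [D, h, sub_self, mul_zero, add_zero]
      positivity
  refine no_retraction hR (fun x => x - τ x • V x) (fun x hx => ?_) (fun x hx => ?_)
    (fun x hx => ?_)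
  · have hi : ContDiffAt ℝ 1 (fun x => ⟪V x, x⟫) x := hV.contDiffAt.inner ℝ contDiffAt_id
    have hn : ContDiffAt ℝ 1 (fun x => ‖V x‖ ^ 2) x := hV.contDiffAt.norm_sq ℝ
    have hD' : ContDiffAt ℝ 1 D x :=
      (hi.pow 2).add (hn.mul (contDiffAt_const.sub (contDiffAt_id.norm_sq ℝ)))
    exact contDiffAt_id.sub
      (((hi.add (hD'.sqrt (hD x hx).ne')).div hn (ha x).ne').smul hV.contDiffAt)
  · have h1 : D x = ⟪V x, x⟫ ^ 2 := by simp [D, hx]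
    have h2 : τ x = 0 := by
      simp only [τ, h1, Real.sqrt_sq_eq_abs, abs_of_neg (hin x hx), add_neg_cancel, zero_div]
    simp [h2]
  · have h1 : ‖x - τ x • V x‖ ^ 2 = R ^ 2 := by
      rw [norm_sub_sq_real, real_inner_smul_right, norm_smul, mul_pow, Real.norm_eq_abs, sq_abs,
        real_inner_comm]
      have h2 : √(D x) ^ 2 = D x := Real.sq_sqrt (hD x hx).le
      have h3 : τ x * ‖V x‖ ^ 2 = ⟪V x, x⟫ + √(D x) := div_mul_cancel₀ _ (ha x).ne'
      have h4 : ‖V x‖ ^ 2 * (τ x ^ 2 * ‖V x‖ ^ 2 - 2 * (τ x * ⟪V x, x⟫))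
          = ‖V x‖ ^ 2 * (R ^ 2 - ‖x‖ ^ 2) := by
        calc _ = (τ x * ‖V x‖ ^ 2) * (τ x * ‖V x‖ ^ 2 - 2 * ⟪V x, x⟫) := by ring
          _ = √(D x) ^ 2 - ⟪V x, x⟫ ^ 2 := by rw [h3]; ring
          _ = _ := by rw [h2]; simp only [D]; ring
      have h5 := mul_left_cancel₀ (ha x).ne' h4
      linarith
    exact (sq_eq_sq₀ (norm_nonneg _) hR.le).mp h1

lemma norm_le_sum_abs {p : ℕ} (x : Rn p) : ‖x‖ ≤ ∑ i, |x i| := by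
  have h : x = ∑ i, EuclideanSpace.single i (x i) := by
    ext j
    simp [Finset.sum_apply, Pi.single_apply]
  calc ‖x‖ = ‖∑ i, EuclideanSpace.single i (x i)‖ := by rw [← h]
    _ ≤ ∑ i, ‖EuclideanSpace.single i (x i)‖ := norm_sum_le _ _
    _ = _ := by simp

/-- The Poincaré–Miranda theorem for `C¹` maps. The cube is parametrized by all of `ℝ^p` through a
smooth step function in each coordinate; adding a restoring field that vanishes exactly on
`[-1, 1]^p` makes the composite point inwards along a large sphere without creating zeros outside
`[-1, 1]^p`. -/
lemma poincare_miranda {p : ℕ} (Φ : (Fin p → ℝ) → Fin p → ℝ) (hΦ : ContDiff ℝ 1 Φ)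
    (hlo : ∀ t ∈ Icc (0 : Fin p → ℝ) 1, ∀ i, t i = 0 → 0 ≤ Φ t i)
    (hhi : ∀ t ∈ Icc (0 : Fin p → ℝ) 1, ∀ i, t i = 1 → Φ t i ≤ 0) :
    ∃ t ∈ Icc (0 : Fin p → ℝ) 1, ∀ i, Φ t i = 0 := by
  obtain ⟨M, hM⟩ := (isCompact_Icc (a := (0 : Fin p → ℝ)) (b := 1)).exists_bound_of_continuousOn
    hΦ.continuous.continuousOn
  let σ : ℝ → ℝ := fun s => Real.smoothTransition ((s + 1) / 2)
  let S : Rn p → Fin p → ℝ := fun x i => σ (x i)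
  have hS : ∀ x, S x ∈ Icc (0 : Fin p → ℝ) 1 := fun x =>
    ⟨fun i => Real.smoothTransition.nonneg _, fun i => Real.smoothTransition.le_one _⟩
  have hM0 : 0 ≤ M := (norm_nonneg _).trans (hM _ (hS 0))
  let η : ℝ → ℝ := fun s => expNegInvGlue (-1 - s) - expNegInvGlue (s - 1)
  have hηlo : ∀ s, s < -1 → 0 < η s := fun s hs => by
    simp only [η]
    rw [expNegInvGlue.zero_of_nonpos (show s - 1 ≤ 0 by linarith), sub_zero]
    exact expNegInvGlue.pos_of_pos (by linarith)
  have hηhi : ∀ s, 1 < s → η s < 0 := fun s hs => by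
    simp only [η]
    rw [expNegInvGlue.zero_of_nonpos (show -1 - s ≤ 0 by linarith), zero_sub]
    exact neg_neg_of_pos (expNegInvGlue.pos_of_pos (by linarith))
  have hη0 : ∀ s, -1 ≤ s → s ≤ 1 → η s = 0 := fun s h1 h2 => by
    simp only [η]
    rw [expNegInvGlue.zero_of_nonpos (show -1 - s ≤ 0 by linarith),
      expNegInvGlue.zero_of_nonpos (show s - 1 ≤ 0 by linarith), sub_zero]
  set c : ℝ := expNegInvGlue 1 with hc
  have hc0 : 0 < c := expNegInvGlue.pos_of_pos one_pos
  have hηgrow : ∀ s, η s * s ≤ 2 * c - c * |s| := by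
    intro s
    rcases le_or_gt |s| 2 with h2 | h2
    · have h3 : η s * s ≤ 0 := by
        rcases lt_or_ge s (-1) with h | h
        · exact mul_nonpos_of_nonneg_of_nonpos (hηlo s h).le (by linarith)
        · rcases lt_or_ge 1 s with h' | h'
          · exact mul_nonpos_of_nonpos_of_nonneg (hηhi s h').le (by linarith)
          · simp [hη0 s h h']
      nlinarith
    · rcases lt_abs.mp h2 with h | h
      · have h4 : c ≤ expNegInvGlue (s - 1) := expNegInvGlue.monotone (by linarith)
        have h5 : η s = - expNegInvGlue (s - 1) := by
          simp only [η]
          rw [expNegInvGlue.zero_of_nonpos (show -1 - s ≤ 0 by linarith), zero_sub]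
        rw [h5, abs_of_pos (by linarith)]
        nlinarith
      · have h4 : c ≤ expNegInvGlue (-1 - s) := expNegInvGlue.monotone (by linarith)
        have h5 : η s = expNegInvGlue (-1 - s) := by
          simp only [η]
          rw [expNegInvGlue.zero_of_nonpos (show s - 1 ≤ 0 by linarith), sub_zero]
        rw [h5, abs_of_neg (by linarith)]
        nlinarith
  have hSlo : ∀ x i, x i ≤ -1 → 0 ≤ Φ (S x) i := fun x i hx =>
    hlo _ (hS x) i (Real.smoothTransition.zero_of_nonpos (by linarith))
  have hShi : ∀ x i, 1 ≤ x i → Φ (S x) i ≤ 0 := fun x i hx =>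
    hhi _ (hS x) i (Real.smoothTransition.one_of_one_le (by linarith))
  have hΦgrow : ∀ x i, Φ (S x) i * x i ≤ M := by
    intro x i
    rcases le_or_gt (x i) (-1) with h | h
    · exact (mul_nonpos_of_nonneg_of_nonpos (hSlo x i h) (by linarith)).trans hM0
    · rcases le_or_gt 1 (x i) with h' | h'
      · exact (mul_nonpos_of_nonpos_of_nonneg (hShi x i h') (by linarith)).trans hM0
      · have h1 : |Φ (S x) i| ≤ M := (norm_le_pi_norm (Φ (S x)) i).trans (hM _ (hS x))
        calc _ ≤ |Φ (S x) i * x i| := le_abs_self _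
          _ = |Φ (S x) i| * |x i| := abs_mul _ _
          _ ≤ M * 1 := mul_le_mul h1 (abs_le.mpr ⟨h.le, h'.le⟩) (abs_nonneg _) hM0
          _ = M := mul_one M
  let V : Rn p → Rn p := fun x => WithLp.toLp 2 fun i => Φ (S x) i + η (x i)
  have hS1 : ContDiff ℝ 1 S := by
    refine contDiff_pi.mpr fun i => ?_
    have h1 : ContDiff ℝ 1 fun x : Rn p => (x i + 1) / 2 := by fun_prop
    exact (Real.smoothTransition.contDiff (n := 1)).comp h1
  have hV : ContDiff ℝ 1 V := by
    refine contDiff_euclidean.mpr fun i => ?_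
    have h1 : ContDiff ℝ 1 fun x : Rn p => -1 - x i := by fun_prop
    have h2 : ContDiff ℝ 1 fun x : Rn p => x i - 1 := by fun_prop
    have h3 : ContDiff ℝ 1 fun x : Rn p => Φ (S x) i := contDiff_pi.mp (hΦ.comp hS1) i
    exact h3.add (((expNegInvGlue.contDiff (n := 1)).comp h1).sub
      ((expNegInvGlue.contDiff (n := 1)).comp h2))
  obtain ⟨x, hx⟩ := exists_zero_of_inward (R := p * (M + 2 * c) / c + 1) (by positivity) V hV (by
    intro x hx
    have h1 : ⟪V x, x⟫ = ∑ i, (Φ (S x) i * x i + η (x i) * x i) := by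
      rw [PiLp.inner_apply]
      refine Finset.sum_congr rfl fun i _ => ?_
      simp [V]
      ring
    have h2 : ⟪V x, x⟫ ≤ ∑ i : Fin p, (M + 2 * c - c * |x i|) := by
      rw [h1]
      refine Finset.sum_le_sum fun i _ => ?_
      linarith [hΦgrow x i, hηgrow (x i)]
    rw [Finset.sum_sub_distrib, ← Finset.mul_sum, Finset.sum_const, Finset.card_univ,
      Fintype.card_fin, nsmul_eq_mul] at h2
    have h3 : c * ‖x‖ ≤ c * ∑ i, |x i| := mul_le_mul_of_nonneg_left (norm_le_sum_abs x) hc0.le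
    have h4 : c * ‖x‖ = p * (M + 2 * c) + c := by
      rw [hx]; field_simp
    linarith)
  have hxi : ∀ i, Φ (S x) i + η (x i) = 0 := fun i => congrArg (fun v : Rn p => v i) hx
  refine ⟨S x, hS x, fun i => ?_⟩
  have hge : -1 ≤ x i := by
    by_contra h
    push Not at h
    linarith [hxi i, hSlo x i h.le, hηlo _ h]
  have hle : x i ≤ 1 := by
    by_contra h
    push Not at h
    linarith [hxi i, hShi x i h.le, hηhi _ h]
  simpa [hη0 _ hge hle] using hxi i

/-! ### Relations between the stationarity notions -/

/-- The systems of weak-stationarity multipliers form a convex set. -/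
lemma MpccWeakMult.convexComb {n l m p : ℕ} {f : Rn n → ℝ} {g : Fin l → Rn n → ℝ}
    {h : Fin m → Rn n → ℝ} {G H : Fin p → Rn n → ℝ} {xb : Rn n} {ι : Type*} [Fintype ι]
    {lam : ι → Fin l → ℝ} {eta : ι → Fin m → ℝ} {mu nu : ι → Fin p → ℝ}
    (hw : ∀ a, MpccWeakMult f g h G H xb (lam a) (eta a) (mu a) (nu a))
    (θ : ι → ℝ) (hθ : ∀ a, 0 ≤ θ a) (hsum : ∑ a, θ a = 1) :
    MpccWeakMult f g h G H xb (fun i => ∑ a, θ a * lam a i) (fun i => ∑ a, θ a * eta a i)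
      (fun i => ∑ a, θ a * mu a i) (fun i => ∑ a, θ a * nu a i) := by
  have swap : ∀ (k : ℕ) (c : ι → Fin k → ℝ) (v : Fin k → Rn n),
      ∑ i, (∑ a, θ a * c a i) • v i = ∑ a, θ a • ∑ i, c a i • v i := by
    intro k c v
    simp_rw [Finset.sum_smul, Finset.smul_sum, smul_smul]
    exact Finset.sum_comm
  refine ⟨?_, fun i hi => ?_, fun i hi => ?_, fun i h1 h2 => ?_, fun i h1 h2 => ?_⟩
  · have h0 : gradient f xb = ∑ a, θ a • gradient f xb := by
      rw [← Finset.sum_smul, hsum, one_smul]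
    simp only [swap]
    rw [h0, ← Finset.sum_add_distrib, ← Finset.sum_add_distrib, ← Finset.sum_sub_distrib,
      ← Finset.sum_sub_distrib]
    refine Finset.sum_eq_zero fun a _ => ?_
    rw [← smul_add, ← smul_add, ← smul_sub, ← smul_sub, (hw a).1, smul_zero]
  · exact Finset.sum_nonneg fun a _ => mul_nonneg (hθ a) ((hw a).2.1 i hi)
  · exact Finset.sum_eq_zero fun a _ => by rw [(hw a).2.2.1 i hi, mul_zero]
  · exact Finset.sum_eq_zero fun a _ => by rw [(hw a).2.2.2.1 i h1 h2, mul_zero]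
  · exact Finset.sum_eq_zero fun a _ => by rw [(hw a).2.2.2.2 i h1 h2, mul_zero]

/-- The multilinear weight of the vertex `a` of the cube at the point `t`. -/
def vertexWeight {p : ℕ} (t : Fin p → ℝ) (a : Fin p → Bool) : ℝ :=
  ∏ i, if a i then t i else 1 - t i

lemma vertexWeight_nonneg {p : ℕ} {t : Fin p → ℝ} (ht : t ∈ Icc (0 : Fin p → ℝ) 1)
    (a : Fin p → Bool) : 0 ≤ vertexWeight t a := by
  refine Finset.prod_nonneg fun i _ => ?_
  have h1 : 0 ≤ t i := ht.1 i
  have h2 : t i ≤ 1 := ht.2 i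
  split_ifs
  exacts [h1, by linarith]

lemma vertexWeight_sum {p : ℕ} (t : Fin p → ℝ) : ∑ a, vertexWeight t a = 1 := by
  have h := Finset.prod_univ_sum (fun _ : Fin p => (Finset.univ : Finset Bool))
    (fun i b => if b then t i else 1 - t i)
  rw [Fintype.piFinset_univ] at h
  simp only [vertexWeight]
  rw [← h]
  exact Finset.prod_eq_one fun i _ => by simp

lemma vertexWeight_eq_zero {p : ℕ} {t : Fin p → ℝ} {a : Fin p → Bool} (i : Fin p)
    (h : (if a i then t i else 1 - t i) = 0) : vertexWeight t a = 0 :=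
  Finset.prod_eq_zero (Finset.mem_univ i) h

lemma vertexWeight_contDiff {p : ℕ} (a : Fin p → Bool) :
    ContDiff ℝ 1 fun t : Fin p → ℝ => vertexWeight t a := by
  refine contDiff_prod fun i _ => ?_
  cases a i
  · simpa using contDiff_const.sub (contDiff_apply ℝ ℝ i)
  · simpa using contDiff_apply ℝ ℝ i

/-- The multipliers belonging to the `2 ^ p` vertices `α` are interpolated multilinearly over the
cube. The function `((1 - d) μ - d ν) (e (-μ) + e (-ν))`, with `e` smooth, nonnegative and
vanishing exactly on `(-∞, 0]`, is zero iff `(μ, ν)` satisfies the `C_d` condition; it is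
nonnegative where `0 ≤ μ` and nonpositive where `0 ≤ ν`, so that the Poincaré–Miranda theorem
provides a common zero. -/
lemma cStat_of_aStat {n l m p : ℕ} {f : Rn n → ℝ} {g : Fin l → Rn n → ℝ}
    {h : Fin m → Rn n → ℝ} {G H : Fin p → Rn n → ℝ} {xb : Rn n}
    (hA : ∀ α : Fin p → ℝ, IsBinaryVec α → MpccAStat f g h G H xb α)
    (d : Fin p → ℝ) (hd : IsUnitIntervalVec d) : MpccCStat f g h G H xb d := by
  classical
  choose lam eta mu nu hw hmu hnu using fun a : Fin p → Bool =>
    hA (fun i => if a i then 1 else 0) (fun i => by cases a i <;> simp)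
  let μ : (Fin p → ℝ) → Fin p → ℝ := fun t i => ∑ a, vertexWeight t a * mu a i
  let ν : (Fin p → ℝ) → Fin p → ℝ := fun t i => ∑ a, vertexWeight t a * nu a i
  have hμ1 : ∀ i, ContDiff ℝ 1 fun t => μ t i := fun i =>
    ContDiff.sum fun a _ => (vertexWeight_contDiff a).mul contDiff_const
  have hν1 : ∀ i, ContDiff ℝ 1 fun t => ν t i := fun i =>
    ContDiff.sum fun a _ => (vertexWeight_contDiff a).mul contDiff_const
  let Φ : (Fin p → ℝ) → Fin p → ℝ := fun t i =>
    if G i xb = 0 ∧ H i xb = 0 then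
      ((1 - d i) * μ t i - d i * ν t i) * (expNegInvGlue (-μ t i) + expNegInvGlue (-ν t i))
    else 0
  have hΦ : ContDiff ℝ 1 Φ := by
    refine contDiff_pi.mpr fun i => ?_
    by_cases hi : G i xb = 0 ∧ H i xb = 0
    · simp only [Φ, if_pos hi]
      exact ((contDiff_const.mul (hμ1 i)).sub (contDiff_const.mul (hν1 i))).mul
        (((expNegInvGlue.contDiff (n := 1)).comp (hμ1 i).neg).add
          ((expNegInvGlue.contDiff (n := 1)).comp (hν1 i).neg))
    · simp only [Φ, if_neg hi]
      exact contDiff_const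
  obtain ⟨t, ht, hzero⟩ := poincare_miranda Φ hΦ (by
    intro t ht i hti
    by_cases hi : G i xb = 0 ∧ H i xb = 0
    · simp only [Φ, if_pos hi]
      have hpos : 0 ≤ μ t i := by
        refine Finset.sum_nonneg fun a _ => ?_
        cases hai : a i
        · exact mul_nonneg (vertexWeight_nonneg ht a) (hmu a i hi.1 hi.2 (by simp [hai]))
        · rw [vertexWeight_eq_zero i (by simp [hai, hti]), zero_mul]
      rcases le_or_gt 0 (ν t i) with hν | hν
      · rw [expNegInvGlue.zero_of_nonpos (neg_nonpos.mpr hpos),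
          expNegInvGlue.zero_of_nonpos (neg_nonpos.mpr hν), add_zero, mul_zero]
      · refine mul_nonneg ?_ (add_nonneg (expNegInvGlue.nonneg _) (expNegInvGlue.nonneg _))
        nlinarith [(hd i).1, (hd i).2, mul_nonneg (sub_nonneg.mpr (hd i).2) hpos]
    · simp only [Φ, if_neg hi, le_refl]) (by
    intro t ht i hti
    by_cases hi : G i xb = 0 ∧ H i xb = 0
    · simp only [Φ, if_pos hi]
      have hpos : 0 ≤ ν t i := by
        refine Finset.sum_nonneg fun a _ => ?_
        cases hai : a i
        · rw [vertexWeight_eq_zero i (by simp [hai, hti]), zero_mul]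
        · exact mul_nonneg (vertexWeight_nonneg ht a) (hnu a i hi.1 hi.2 (by simp [hai]))
      rcases le_or_gt 0 (μ t i) with hμ | hμ
      · rw [expNegInvGlue.zero_of_nonpos (neg_nonpos.mpr hμ),
          expNegInvGlue.zero_of_nonpos (neg_nonpos.mpr hpos), add_zero, mul_zero]
      · refine mul_nonpos_of_nonpos_of_nonneg ?_
          (add_nonneg (expNegInvGlue.nonneg _) (expNegInvGlue.nonneg _))
        nlinarith [(hd i).1, (hd i).2, mul_nonneg (hd i).1 hpos]
    · simp only [Φ, if_neg hi, le_refl])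
  refine ⟨_, _, μ t, ν t, MpccWeakMult.convexComb hw (vertexWeight t) (vertexWeight_nonneg ht)
    (vertexWeight_sum t), fun i hG hH => ?_⟩
  have h1 := hzero i
  simp only [Φ, if_pos (And.intro hG hH)] at h1
  rcases mul_eq_zero.mp h1 with h2 | h2
  · exact Or.inr (sub_eq_zero.mp h2)
  · left
    have h3 := expNegInvGlue.nonneg (-μ t i)
    have h4 := expNegInvGlue.nonneg (-ν t i)
    exact ⟨neg_nonpos.mp (expNegInvGlue.zero_iff_nonpos.mp (by linarith)),
      neg_nonpos.mp (expNegInvGlue.zero_iff_nonpos.mp (by linarith))⟩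

/-- Farkas' lemma on the branch `α`: the cone of the branch problem is contained in the
MPCC-linearized cone, and its polar consists of the `A_α` multiplier combinations. -/
lemma aStat_of_linB {n l m p : ℕ} {f : Rn n → ℝ} {g : Fin l → Rn n → ℝ}
    {h : Fin m → Rn n → ℝ} {G H : Fin p → Rn n → ℝ} {xb : Rn n}
    (hB : -gradient f xb ∈ polarCone (MpccLinCone g h G H xb))
    (α : Fin p → ℝ) (hα : IsBinaryVec α) : MpccAStat f g h G H xb α := by
  obtain ⟨c, hP, hQ, hc⟩ := farkas_sign (ι := (Fin l ⊕ Fin m) ⊕ (Fin p ⊕ Fin p))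
    (Sum.elim (Sum.elim (fun i => gradient (g i) xb) (fun i => gradient (h i) xb))
      (Sum.elim (fun i => - gradient (G i) xb) (fun i => - gradient (H i) xb)))
    (- gradient f xb)
    (Sum.elim (Sum.elim (fun _ => True) (fun _ => False))
      (Sum.elim (fun i => 0 < G i xb ∨ (G i xb = 0 ∧ H i xb = 0 ∧ α i = 0))
        (fun i => 0 < H i xb ∨ (G i xb = 0 ∧ H i xb = 0 ∧ α i = 1))))
    (Sum.elim (Sum.elim (fun i => g i xb ≠ 0) (fun _ => False))
      (Sum.elim (fun i => 0 < G i xb) (fun i => 0 < H i xb))) (by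
      intro x h1 h2
      have g1 := fun i => h1 (Sum.inl (Sum.inl i))
      have e1 := fun i => h1 (Sum.inl (Sum.inr i))
      have G1 := fun i => h1 (Sum.inr (Sum.inl i))
      have H1 := fun i => h1 (Sum.inr (Sum.inr i))
      have e2 := fun i => h2 (Sum.inl (Sum.inr i))
      have G2 := fun i => h2 (Sum.inr (Sum.inl i))
      have H2 := fun i => h2 (Sum.inr (Sum.inr i))
      simp only [Sum.elim_inl, Sum.elim_inr, not_false_eq_true, true_implies, inner_neg_left,
        not_not, neg_nonpos, neg_nonneg, not_lt, ne_eq] at g1 e1 G1 H1 e2 G2 H2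
      refine hB x ⟨g1, fun i => le_antisymm (e1 i) (e2 i), fun i hG hH => ?_, fun i hG hH => ?_,
        fun i hG hH => ?_⟩
      · exact le_antisymm (G2 i (by rintro (h | h); exacts [h.ne' hG, hH.ne' h.2.1])) (G1 i hG.le)
      · exact le_antisymm (H2 i (by rintro (h | h); exacts [h.ne' hH, hG.ne' h.1])) (H1 i hH.le)
      · refine ⟨G1 i hG.le, H1 i hH.le, ?_⟩
        rcases hα i with h0 | h0
        · rw [le_antisymm (H2 i (by simp [hG, hH, h0])) (H1 i hH.le), mul_zero]
        · rw [le_antisymm (G2 i (by simp [hG, hH, h0])) (G1 i hG.le), zero_mul])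
  refine ⟨fun i => c (Sum.inl (Sum.inl i)), fun i => c (Sum.inl (Sum.inr i)),
    fun i => c (Sum.inr (Sum.inl i)), fun i => c (Sum.inr (Sum.inr i)),
    ⟨?_, fun i _ => hP (Sum.inl (Sum.inl i)) trivial, fun i hi => ?_, fun i hG hH => ?_,
      fun i hG hH => ?_⟩, fun i hG hH h0 => ?_, fun i hG hH h0 => ?_⟩
  · simp only [Fintype.sum_sum_type, Sum.elim_inl, Sum.elim_inr, smul_neg,
      Finset.sum_neg_distrib] at hc
    rw [neg_eq_iff_eq_neg.mp hc]
    abel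
  · exact le_antisymm (hQ (Sum.inl (Sum.inl i)) hi) (hP (Sum.inl (Sum.inl i)) trivial)
  · exact le_antisymm (hQ (Sum.inr (Sum.inl i)) hG) (hP (Sum.inr (Sum.inl i)) (Or.inl hG))
  · exact le_antisymm (hQ (Sum.inr (Sum.inr i)) hH) (hP (Sum.inr (Sum.inr i)) (Or.inl hH))
  · exact hP (Sum.inr (Sum.inl i)) (Or.inr ⟨hG, hH, h0⟩)
  · exact hP (Sum.inr (Sum.inr i)) (Or.inr ⟨hG, hH, h0⟩)

/-- Every direction of the MPCC-linearized cone belongs to the cone of some branch `α`, on which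
the `A_α` multipliers give the sign of the directional derivative of `f`. -/
lemma linB_of_aStat {n l m p : ℕ} {f : Rn n → ℝ} {g : Fin l → Rn n → ℝ}
    {h : Fin m → Rn n → ℝ} {G H : Fin p → Rn n → ℝ} {xb : Rn n}
    (hfeas : xb ∈ MpccFeasible g h G H)
    (hA : ∀ α : Fin p → ℝ, IsBinaryVec α → MpccAStat f g h G H xb α) :
    -gradient f xb ∈ polarCone (MpccLinCone g h G H xb) := by
  classical
  intro y hy
  obtain ⟨yg, yh, yG, yH, yb⟩ := hy
  obtain ⟨lam, eta, mu, nu, ⟨heq, hl, hl0, hm0, hn0⟩, hmu, hnu⟩ :=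
    hA (fun i => if ⟪gradient (H i) xb, y⟫ = 0 then 0 else 1)
      (fun i => by
        by_cases hi : ⟪gradient (H i) xb, y⟫ = 0
        exacts [Or.inl (if_pos hi), Or.inr (if_neg hi)])
  have hin := congrArg (fun v => ⟪v, y⟫) heq
  simp only [inner_sub_left, inner_add_left, sum_inner, real_inner_smul_left, inner_zero_left]
    at hin
  have s1 : ∑ i, lam i * ⟪gradient (g i) xb, y⟫ ≤ 0 := Finset.sum_nonpos fun i _ => by
    by_cases hi : g i xb = 0
    · exact mul_nonpos_of_nonneg_of_nonpos (hl i hi) (yg i hi)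
    · rw [hl0 i hi, zero_mul]
  have s2 : ∑ i, eta i * ⟪gradient (h i) xb, y⟫ = 0 := Finset.sum_eq_zero fun i _ => by
    rw [yh i, mul_zero]
  have s3 : 0 ≤ ∑ i, (mu i * ⟪gradient (G i) xb, y⟫ + nu i * ⟪gradient (H i) xb, y⟫) := by
    refine Finset.sum_nonneg fun i _ => ?_
    have hGH := (Finset.sum_eq_zero_iff_of_nonneg
      (fun j _ => mul_nonneg (hfeas.2.2.1 j) (hfeas.2.2.2.1 j))).mp hfeas.2.2.2.2 i
      (Finset.mem_univ i)
    rcases (hfeas.2.2.1 i).lt_or_eq with hG | hG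
    · have hH : H i xb = 0 := (mul_eq_zero.mp hGH).resolve_left hG.ne'
      rw [hm0 i hG hH, yH i hG hH]
      simp
    · rcases (hfeas.2.2.2.1 i).lt_or_eq with hH | hH
      · rw [hn0 i hG.symm hH, yG i hG.symm hH]
        simp
      · obtain ⟨b1, b2, b3⟩ := yb i hG.symm hH.symm
        by_cases hi : ⟪gradient (H i) xb, y⟫ = 0
        · rw [hi, mul_zero, add_zero]
          exact mul_nonneg (hmu i hG.symm hH.symm (if_pos hi)) b1
        · rw [(mul_eq_zero.mp b3).resolve_right hi, mul_zero, zero_add]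
          exact mul_nonneg (hnu i hG.symm hH.symm (if_neg hi)) b2
  rw [Finset.sum_add_distrib] at s3
  rw [inner_neg_left]
  linarith

/-- equivalence of linearized B-stationarity, A_α-stationarity for
all α, C_d-stationarity for all d, and P_α-stationarity for all α. -/
theorem mpcc_stat_tfae {n l m p : ℕ} (f : Rn n → ℝ) (g : Fin l → Rn n → ℝ)
    (h : Fin m → Rn n → ℝ) (G H : Fin p → Rn n → ℝ) (xb : Rn n)
    (hf : Differentiable ℝ f) (hg : ∀ i, Differentiable ℝ (g i))
    (hh : ∀ i, Differentiable ℝ (h i)) (hG : ∀ i, Differentiable ℝ (G i))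
    (hH : ∀ i, Differentiable ℝ (H i))
    (hfeas : xb ∈ MpccFeasible g h G H) :
    List.TFAE
      [(-gradient f xb ∈ polarCone (MpccLinCone g h G H xb)),
       (∀ α : Fin p → ℝ, IsBinaryVec α → MpccAStat f g h G H xb α),
       (∀ d : Fin p → ℝ, IsUnitIntervalVec d → MpccCStat f g h G H xb d),
       (∀ α : Fin p → ℝ, IsBinaryVec α → MpccPStat f g h G H xb α)] := by
  tfae_have 1 → 2 := fun hB α hα => aStat_of_linB hB α hα
  tfae_have 2 → 1 := fun hA => linB_of_aStat hfeas hA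
  tfae_have 2 → 3 := fun hA d hd => cStat_of_aStat hA d hd
  tfae_have 3 → 4 := by
    intro hC α hα
    obtain ⟨lam, eta, mu, nu, hw, hc⟩ := hC α (fun i => by rcases hα i with h0 | h0 <;> simp [h0])
    refine ⟨lam, eta, mu, nu, hw, fun i hGi hHi h0 => ?_, fun i hGi hHi h0 => ?_⟩
    · simpa [h0] using hc i hGi hHi
    · refine (hc i hGi hHi).imp_right fun h1 => ?_
      rw [h0] at h1
      linarith
  tfae_have 4 → 2 := by
    intro hP α hα
    obtain ⟨lam, eta, mu, nu, hw, h0, h1⟩ := hP α hα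
    refine ⟨lam, eta, mu, nu, hw, fun i hGi hHi hi => ?_, fun i hGi hHi hi => ?_⟩
    · rcases h0 i hGi hHi hi with h2 | h2
      exacts [h2.1, h2.ge]
    · rcases h1 i hGi hHi hi with h2 | h2
      exacts [h2.2, h2.ge]
  tfae_finish
end
end

section
/- Let x̄ be a local minimizer of the MPVC and suppose that MPVC-GCQ holds at x̄ or that GCQ holds for NLP(0) at x̄. Then x̄ is A_0-stationary (A_α-stationary with α = 0), and in particular x̄ is an M-stationary point of the MPVC. -/
/-!
The negative gradient `-∇f(x̄)` lies in the polar of the linearization cone of NLP(0), and Farkas'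
lemma turns this membership into multipliers.

At a local minimizer, `-∇f(x̄)` is polar to the Bouligand tangent cone of the feasible set
(`neg_gradient_mem_polarCone`). The linearization cone of NLP(0) is contained in the
MPVC-linearized cone, and the feasible set of NLP(0) is contained in that of the MPVC, so under
either constraint qualification `-∇f(x̄)` is polar to the linearization cone of NLP(0).
That cone is polyhedral, hence `-∇f(x̄)` is a nonnegative combination of the active constraint
gradients (`farkas`). In NLP(0) the biactive indices carry only the equation `H_i = 0`, so their
`G`-multiplier vanishes; this is A₀-stationarity, and it makes every product `μ_i ν_i` vanish.
-/

open Set Filter RealInnerProductSpace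

noncomputable section

variable {n l m p : ℕ}

/-- The feasible set of the MPVC. -/
def MpvcFeasible (g : Fin l → Rn n → ℝ) (h : Fin m → Rn n → ℝ)
    (G H : Fin p → Rn n → ℝ) : Set (Rn n) :=
  {x | (∀ i, g i x ≤ 0) ∧ (∀ i, h i x = 0) ∧ (∀ i, 0 ≤ H i x) ∧
    (∀ i, G i x * H i x ≤ 0)}

/-- The MPVC-linearized tangent cone at xb. -/
def MpvcLinCone (g : Fin l → Rn n → ℝ) (h : Fin m → Rn n → ℝ)
    (G H : Fin p → Rn n → ℝ) (xb : Rn n) : Set (Rn n) :=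
  {d | (∀ i, g i xb = 0 → ⟪gradient (g i) xb, d⟫ ≤ 0) ∧
    (∀ i, ⟪gradient (h i) xb, d⟫ = 0) ∧
    (∀ i, G i xb = 0 → 0 < H i xb → ⟪gradient (G i) xb, d⟫ ≤ 0) ∧
    (∀ i, 0 < G i xb → H i xb = 0 → ⟪gradient (H i) xb, d⟫ = 0) ∧
    (∀ i, (G i xb = 0 ∧ H i xb = 0) ∨ (G i xb < 0 ∧ H i xb = 0) →
      0 ≤ ⟪gradient (H i) xb, d⟫) ∧
    (∀ i, G i xb = 0 → H i xb = 0 →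
      ⟪gradient (G i) xb, d⟫ * ⟪gradient (H i) xb, d⟫ ≤ 0)}

/-- The weak stationarity system of the MPVC for given multipliers. -/
def MpvcWeakMult (f : Rn n → ℝ) (g : Fin l → Rn n → ℝ) (h : Fin m → Rn n → ℝ)
    (G H : Fin p → Rn n → ℝ) (xb : Rn n)
    (lam : Fin l → ℝ) (eta : Fin m → ℝ) (mu nu : Fin p → ℝ) : Prop :=
  gradient f xb + ∑ i, lam i • gradient (g i) xb + ∑ i, eta i • gradient (h i) xb
    + ∑ i, mu i • gradient (G i) xb - ∑ i, nu i • gradient (H i) xb = 0 ∧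
  (∀ i, g i xb = 0 → 0 ≤ lam i) ∧ (∀ i, g i xb ≠ 0 → lam i = 0) ∧
  (∀ i, (0 < G i xb ∧ H i xb = 0) ∨ (G i xb < 0 ∧ H i xb = 0) ∨
    (G i xb < 0 ∧ 0 < H i xb) → mu i = 0) ∧
  (∀ i, (G i xb = 0 ∧ 0 < H i xb) ∨ (G i xb = 0 ∧ H i xb = 0) → 0 ≤ mu i) ∧
  (∀ i, (G i xb = 0 ∧ 0 < H i xb) ∨ (G i xb < 0 ∧ 0 < H i xb) → nu i = 0) ∧
  (∀ i, G i xb < 0 → H i xb = 0 → 0 ≤ nu i)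

/-- A_α-stationarity for the MPVC. -/
def MpvcAStat (f : Rn n → ℝ) (g : Fin l → Rn n → ℝ) (h : Fin m → Rn n → ℝ)
    (G H : Fin p → Rn n → ℝ) (xb : Rn n) (α : Fin p → ℝ) : Prop :=
  ∃ lam eta mu nu, MpvcWeakMult f g h G H xb lam eta mu nu ∧
    (∀ i, G i xb = 0 → H i xb = 0 → α i = 0 → mu i = 0) ∧
    (∀ i, G i xb = 0 → H i xb = 0 → α i = 1 → 0 ≤ nu i)

/-- P_α-stationarity for the MPVC. -/
def MpvcPStat (f : Rn n → ℝ) (g : Fin l → Rn n → ℝ) (h : Fin m → Rn n → ℝ)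
    (G H : Fin p → Rn n → ℝ) (xb : Rn n) (α : Fin p → ℝ) : Prop :=
  ∃ lam eta mu nu, MpvcWeakMult f g h G H xb lam eta mu nu ∧
    (∀ i, G i xb = 0 → H i xb = 0 → α i = 0 → mu i = 0) ∧
    (∀ i, G i xb = 0 → H i xb = 0 → α i = 1 →
      (mu i = 0 ∧ 0 ≤ nu i) ∨ nu i = 0)

/-- C_d-stationarity for the MPVC. -/
def MpvcCStat (f : Rn n → ℝ) (g : Fin l → Rn n → ℝ) (h : Fin m → Rn n → ℝ)
    (G H : Fin p → Rn n → ℝ) (xb : Rn n) (d : Fin p → ℝ) : Prop :=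
  ∃ lam eta mu nu, MpvcWeakMult f g h G H xb lam eta mu nu ∧
    (∀ i, G i xb = 0 → H i xb = 0 →
      (mu i = 0 ∧ 0 ≤ nu i) ∨ (1 - d i) * mu i = -(d i * nu i))

/-- M-stationarity for the MPVC. -/
def MpvcMStat (f : Rn n → ℝ) (g : Fin l → Rn n → ℝ) (h : Fin m → Rn n → ℝ)
    (G H : Fin p → Rn n → ℝ) (xb : Rn n) : Prop :=
  ∃ lam eta mu nu, MpvcWeakMult f g h G H xb lam eta mu nu ∧
    (∀ i, G i xb = 0 → H i xb = 0 → mu i * nu i = 0)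

/-- The feasible set of the branch problem NLP(0) associated with xb. -/
def MpvcNlp0Feasible (g : Fin l → Rn n → ℝ) (h : Fin m → Rn n → ℝ)
    (G H : Fin p → Rn n → ℝ) (xb : Rn n) : Set (Rn n) :=
  {x | (∀ i, g i x ≤ 0) ∧ (∀ i, h i x = 0) ∧
    (∀ i, (0 < G i xb ∧ H i xb = 0) ∨ (G i xb = 0 ∧ H i xb = 0) → H i x = 0) ∧
    (∀ i, (G i xb < 0 ∧ H i xb = 0) ∨ (G i xb < 0 ∧ 0 < H i xb) ∨
      (G i xb = 0 ∧ 0 < H i xb) → G i x ≤ 0 ∧ 0 ≤ H i x)}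

/-- The standard linearization cone of NLP(0) at xb. -/
def MpvcNlp0LinCone (g : Fin l → Rn n → ℝ) (h : Fin m → Rn n → ℝ)
    (G H : Fin p → Rn n → ℝ) (xb : Rn n) : Set (Rn n) :=
  {d | (∀ i, g i xb = 0 → ⟪gradient (g i) xb, d⟫ ≤ 0) ∧
    (∀ i, ⟪gradient (h i) xb, d⟫ = 0) ∧
    (∀ i, (0 < G i xb ∧ H i xb = 0) ∨ (G i xb = 0 ∧ H i xb = 0) →
      ⟪gradient (H i) xb, d⟫ = 0) ∧
    (∀ i, G i xb = 0 → 0 < H i xb → ⟪gradient (G i) xb, d⟫ ≤ 0) ∧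
    (∀ i, G i xb < 0 → H i xb = 0 → 0 ≤ ⟪gradient (H i) xb, d⟫)}

/-- Farkas' lemma for finitely many vectors of a real inner product space. The proof is an
induction on the number of vectors that avoids closedness of finitely generated cones: if the new
vector `a j` is really needed, there is `x` with `⟪a j, x⟫ = 1` violating the conclusion for the old
ones, and replacing every `v` by `v - ⟪v, x⟫ • a j` reduces to the induction hypothesis. -/
theorem farkas {E ι : Type*} [NormedAddCommGroup E] [InnerProductSpace ℝ E] (s : Finset ι) :
    ∀ (a : ι → E) (b : E), (∀ d, (∀ i ∈ s, ⟪a i, d⟫ ≤ 0) → ⟪b, d⟫ ≤ 0) →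
      ∃ c : ι → ℝ, (∀ i, 0 ≤ c i) ∧ b = ∑ i ∈ s, c i • a i := by
  classical
  induction s using Finset.induction_on with
  | empty =>
    intro a b hb
    refine ⟨0, fun _ => le_rfl, ?_⟩
    have hbb := hb b (by simp)
    rw [real_inner_self_eq_norm_sq] at hbb
    simpa using norm_eq_zero.1 (pow_eq_zero_iff two_ne_zero |>.1 (hbb.antisymm (sq_nonneg ‖b‖)))
  | insert j s hj ih =>
    intro a b hb
    by_cases hs : ∀ d, (∀ i ∈ s, ⟪a i, d⟫ ≤ 0) → ⟪b, d⟫ ≤ 0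
    · obtain ⟨c, hc, hbc⟩ := ih a b hs
      refine ⟨Function.update c j 0, fun i => ?_, ?_⟩
      · by_cases hij : i = j
        · subst hij; simp
        · simpa [hij] using hc i
      · rw [Finset.sum_insert hj, hbc]
        simp only [Function.update_self, zero_smul, zero_add]
        refine Finset.sum_congr rfl fun i hi => ?_
        rw [Function.update_of_ne (ne_of_mem_of_not_mem hi hj)]
    · push Not at hs
      obtain ⟨y, hy, hby⟩ := hs
      have hjy : 0 < ⟪a j, y⟫ := by
        by_contra hcon
        exact absurd (hb y fun i hi => by
          rcases Finset.mem_insert.1 hi with rfl | hi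
          · exact not_lt.1 hcon
          · exact hy i hi) (not_le.2 hby)
      set x : E := (⟪a j, y⟫)⁻¹ • y with hx
      have hjx : ⟪a j, x⟫ = 1 := by
        rw [hx, inner_smul_right, inv_mul_cancel₀ hjy.ne']
      have hax : ∀ i ∈ s, ⟪a i, x⟫ ≤ 0 := fun i hi => by
        rw [hx, inner_smul_right]
        exact mul_nonpos_of_nonneg_of_nonpos (inv_nonneg.2 hjy.le) (hy i hi)
      have hbx : 0 ≤ ⟪b, x⟫ := by
        rw [hx, inner_smul_right]
        exact mul_nonneg (inv_nonneg.2 hjy.le) hby.le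
      -- Pairing the modified `v` with `d` is pairing `v` with the projection of `d` along `x`
      -- onto the orthogonal complement of `a j`.
      have key : ∀ v d : E, ⟪v - ⟪v, x⟫ • a j, d⟫ = ⟪v, d - ⟪a j, d⟫ • x⟫ := fun v d => by
        rw [inner_sub_left, inner_sub_right, real_inner_smul_left, real_inner_smul_right v x]
        ring
      obtain ⟨c, hc, hbc⟩ := ih (fun i => a i - ⟪a i, x⟫ • a j) (b - ⟪b, x⟫ • a j) (by
        intro d hd
        rw [key]
        refine hb _ fun i hi => ?_
        rcases Finset.mem_insert.1 hi with rfl | hi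
        · rw [inner_sub_right, inner_smul_right, hjx]
          simp
        · rw [← key]
          exact hd i hi)
      refine ⟨Function.update c j (⟪b, x⟫ - ∑ i ∈ s, c i * ⟪a i, x⟫), fun i => ?_, ?_⟩
      · by_cases hij : i = j
        · subst hij
          have hsum : ∑ k ∈ s, c k * ⟪a k, x⟫ ≤ 0 := Finset.sum_nonpos fun k hk =>
            mul_nonpos_of_nonneg_of_nonpos (hc k) (hax k hk)
          simp only [Function.update_self]
          linarith
        · simpa [hij] using hc i
      · rw [Finset.sum_insert hj, Function.update_self]
        have hupd : ∑ i ∈ s, Function.update c j (⟪b, x⟫ - ∑ i ∈ s, c i * ⟪a i, x⟫) i • a i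
            = ∑ i ∈ s, c i • a i := Finset.sum_congr rfl fun i hi => by
          rw [Function.update_of_ne (ne_of_mem_of_not_mem hi hj)]
        rw [hupd]
        simp only [smul_sub, Finset.sum_sub_distrib, smul_smul, ← Finset.sum_smul] at hbc
        rw [sub_smul]
        refine (sub_eq_iff_eq_add.1 hbc).trans ?_
        abel

theorem neg_gradient_mem_polarCone {n : ℕ} {f : Rn n → ℝ} {F : Set (Rn n)} {x : Rn n}
    (hf : DifferentiableAt ℝ f x) (hmin : IsLocalMinOn f F x) :
    -gradient f x ∈ polarCone (tangentCone' F x) := by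
  rintro d ⟨xk, tk, hxF, htk, hx, -, hd⟩
  have hpos : d ∈ posTangentConeAt F x := by
    refine mem_tangentConeAt_of_seq atTop (fun k => (⟨(tk k)⁻¹, (inv_pos.2 (htk k)).le⟩ : NNReal))
      (fun k => xk k - x) (by simpa using hx.sub_const x)
      (Eventually.of_forall fun k => by simpa using hxF k) hd
  have hnonneg := hmin.hasFDerivWithinAt_nonneg
    (hf.hasGradientAt.hasFDerivAt.hasFDerivWithinAt) hpos
  rw [inner_neg_left]
  simpa using hnonneg

theorem nlp0LinCone_subset {n l m p : ℕ} (g : Fin l → Rn n → ℝ) (h : Fin m → Rn n → ℝ)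
    (G H : Fin p → Rn n → ℝ) (xb : Rn n) :
    MpvcNlp0LinCone g h G H xb ⊆ MpvcLinCone g h G H xb := by
  rintro d ⟨h1, h2, h3, h4, h5⟩
  refine ⟨h1, h2, h4, fun i hi hi' => h3 i (.inl ⟨hi, hi'⟩), ?_, fun i hi hi' => ?_⟩
  · rintro i (hi | hi)
    · exact (h3 i (.inr hi)).ge
    · exact h5 i hi.1 hi.2
  · rw [h3 i (.inr ⟨hi, hi'⟩), mul_zero]

/-- Every index of a feasible `xb` lies in one of the index sets used by NLP(0), so the constraints
of NLP(0) control `G i` and `H i` for all `i`. -/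
theorem nlp0Feasible_subset {n l m p : ℕ} {g : Fin l → Rn n → ℝ} {h : Fin m → Rn n → ℝ}
    {G H : Fin p → Rn n → ℝ} {xb : Rn n} (hfeas : xb ∈ MpvcFeasible g h G H) :
    MpvcNlp0Feasible g h G H xb ⊆ MpvcFeasible g h G H := by
  obtain ⟨-, -, hH0, hGH⟩ := hfeas
  rintro x ⟨h1, h2, h3, h4⟩
  have hcases : ∀ i, H i x = 0 ∨ (G i x ≤ 0 ∧ 0 ≤ H i x) := fun i => by
    rcases (hH0 i).eq_or_lt with hHi | hHi
    · rcases lt_trichotomy (G i xb) 0 with hGi | hGi | hGi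
      · exact .inr (h4 i (.inl ⟨hGi, hHi.symm⟩))
      · exact .inl (h3 i (.inr ⟨hGi, hHi.symm⟩))
      · exact .inl (h3 i (.inl ⟨hGi, hHi.symm⟩))
    · rcases (nonpos_of_mul_nonpos_left (hGH i) hHi).lt_or_eq with hGi | hGi
      · exact .inr (h4 i (.inr (.inl ⟨hGi, hHi⟩)))
      · exact .inr (h4 i (.inr (.inr ⟨hGi, hHi⟩)))
  refine ⟨h1, h2, fun i => ?_, fun i => ?_⟩
  · rcases hcases i with hi | hi
    · exact hi.ge
    · exact hi.2
  · rcases hcases i with hi | hi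
    · rw [hi, mul_zero]
    · exact mul_nonpos_of_nonpos_of_nonneg hi.1 hi.2

theorem tangentCone'_mono {n : ℕ} {F F' : Set (Rn n)} (hF : F ⊆ F') (x : Rn n) :
    tangentCone' F x ⊆ tangentCone' F' x := by
  rintro d ⟨xk, tk, hxF, hrest⟩
  exact ⟨xk, tk, fun k => hF (hxF k), hrest⟩

theorem polarCone_anti {n : ℕ} {C D : Set (Rn n)} (hCD : C ⊆ D) : polarCone D ⊆ polarCone C :=
  fun _ hd y hy => hd y (hCD hy)

/-- The KKT conditions of NLP(0), phrased with MPVC multipliers: the `G`-multipliers vanish on the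
biactive indices. -/
theorem exists_multipliers {n l m p : ℕ} (f : Rn n → ℝ) (g : Fin l → Rn n → ℝ)
    (h : Fin m → Rn n → ℝ) (G H : Fin p → Rn n → ℝ) (xb : Rn n)
    (hpolar : -gradient f xb ∈ polarCone (MpvcNlp0LinCone g h G H xb)) :
    ∃ lam eta mu nu, MpvcWeakMult f g h G H xb lam eta mu nu ∧
      ∀ i, G i xb = 0 → H i xb = 0 → mu i = 0 := by
  classical
  -- One generator per inequality, equations being split into two; the generators of constraints
  -- that are absent from the linearization cone are set to zero. The blocks stand for
  -- `g ≤ 0`, `h ≤ 0`, `-h ≤ 0`, `G ≤ 0`, `H ≤ 0` and `-H ≤ 0`.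
  let a : Fin l ⊕ Fin m ⊕ Fin m ⊕ Fin p ⊕ Fin p ⊕ Fin p → Rn n :=
    Sum.elim (fun i => if g i xb = 0 then gradient (g i) xb else 0) <|
    Sum.elim (fun i => gradient (h i) xb) <|
    Sum.elim (fun i => -gradient (h i) xb) <|
    Sum.elim (fun i => if G i xb = 0 ∧ 0 < H i xb then gradient (G i) xb else 0) <|
    Sum.elim (fun i => if 0 ≤ G i xb ∧ H i xb = 0 then gradient (H i) xb else 0) <|
    (fun i => if H i xb = 0 then -gradient (H i) xb else 0)
  obtain ⟨c, hc, hsum⟩ := farkas Finset.univ a (-gradient f xb) (by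
    intro d hd
    simp only [Finset.mem_univ, true_implies, Sum.forall, a, Sum.elim_inl, Sum.elim_inr] at hd
    obtain ⟨d1, d2, d3, d4, d5, d6⟩ := hd
    refine hpolar d ⟨fun i hi => ?_, fun i => ?_, fun i hi => ?_, fun i hi hi' => ?_,
      fun i hi hi' => ?_⟩
    · simpa [hi] using d1 i
    · have h2 := d2 i
      have h3 := d3 i
      rw [inner_neg_left] at h3
      linarith
    · have hHi : H i xb = 0 := by rcases hi with hi | hi <;> exact hi.2
      have hGi : 0 ≤ G i xb := by
        rcases hi with hi | hi
        · exact hi.1.le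
        · exact hi.1.ge
      have h5 := d5 i
      have h6 := d6 i
      rw [if_pos ⟨hGi, hHi⟩] at h5
      rw [if_pos hHi, inner_neg_left] at h6
      linarith
    · have h4 := d4 i
      rwa [if_pos ⟨hi, hi'⟩] at h4
    · have h6 := d6 i
      rw [if_pos hi', inner_neg_left] at h6
      linarith)
  simp only [Fintype.sum_sum_type, a, Sum.elim_inl, Sum.elim_inr] at hsum
  refine ⟨fun i => if g i xb = 0 then c (.inl i) else 0,
    fun i => c (.inr (.inl i)) - c (.inr (.inr (.inl i))),
    fun i => if G i xb = 0 ∧ 0 < H i xb then c (.inr (.inr (.inr (.inl i)))) else 0,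
    fun i => (if H i xb = 0 then c (.inr (.inr (.inr (.inr (.inr i))))) else 0)
      - (if 0 ≤ G i xb ∧ H i xb = 0 then c (.inr (.inr (.inr (.inr (.inl i))))) else 0),
    ⟨?_, ?_, ?_, ?_, ?_, ?_, ?_⟩, ?_⟩
  · rw [← neg_neg (gradient f xb), hsum]
    simp only [sub_smul, Finset.sum_sub_distrib, smul_neg, Finset.sum_neg_distrib, ite_smul,
      zero_smul, smul_ite, smul_zero]
    have hneg : ∀ i, (if H i xb = 0
        then -(c (.inr (.inr (.inr (.inr (.inr i))))) • gradient (H i) xb) else 0)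
        = -(if H i xb = 0 then c (.inr (.inr (.inr (.inr (.inr i))))) • gradient (H i) xb else 0) :=
      fun i => by split_ifs <;> simp
    simp only [hneg, Finset.sum_neg_distrib]
    abel
  · intro i hi
    simpa [hi] using hc _
  · intro i hi
    simp [hi]
  · intro i hi
    refine if_neg fun hi' => ?_
    rcases hi with hi | hi | hi <;> linarith [hi.1, hi.2, hi'.1, hi'.2]
  · intro i _
    dsimp only
    split_ifs
    · exact hc _
    · exact le_rfl
  · intro i hi
    have hHi : H i xb ≠ 0 := by rcases hi with hi | hi <;> exact hi.2.ne'
    simp [hHi]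
  · intro i hi hi'
    simpa [hi', not_le.2 hi] using hc _
  · intro i hi hi'
    simp [hi']

/-- a local minimizer of the MPVC at which MPVC-GCQ or GCQ for
NLP(0) holds is A_0-stationary, and in particular M-stationary. -/
theorem mpvc_gcq_implies_AStat0_and_MStat {n l m p : ℕ} (f : Rn n → ℝ) (g : Fin l → Rn n → ℝ)
    (h : Fin m → Rn n → ℝ) (G H : Fin p → Rn n → ℝ) (xb : Rn n)
    (hf : Differentiable ℝ f) (hg : ∀ i, Differentiable ℝ (g i))
    (hh : ∀ i, Differentiable ℝ (h i)) (hG : ∀ i, Differentiable ℝ (G i))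
    (hH : ∀ i, Differentiable ℝ (H i))
    (hfeas : xb ∈ MpvcFeasible g h G H)
    (hmin : IsLocalMinOn f (MpvcFeasible g h G H) xb)
    (hcq : polarCone (tangentCone' (MpvcFeasible g h G H) xb)
        = polarCone (MpvcLinCone g h G H xb) ∨
      polarCone (tangentCone' (MpvcNlp0Feasible g h G H xb) xb)
        = polarCone (MpvcNlp0LinCone g h G H xb)) :
    MpvcAStat f g h G H xb (fun _ => 0) ∧ MpvcMStat f g h G H xb := by
  have hmem : -gradient f xb ∈ polarCone (MpvcNlp0LinCone g h G H xb) := by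
    have hT := neg_gradient_mem_polarCone (hf xb) hmin
    rcases hcq with hcq | hcq
    · exact polarCone_anti (nlp0LinCone_subset g h G H xb) (hcq ▸ hT)
    · exact hcq ▸ polarCone_anti (tangentCone'_mono (nlp0Feasible_subset hfeas) xb) hT
  obtain ⟨lam, eta, mu, nu, hweak, hmu⟩ := exists_multipliers f g h G H xb hmem
  refine ⟨⟨lam, eta, mu, nu, hweak, fun i hGi hHi _ => hmu i hGi hHi, fun i _ _ hα => ?_⟩,
    lam, eta, mu, nu, hweak, fun i hGi hHi => by rw [hmu i hGi hHi, zero_mul]⟩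
  exact absurd hα zero_ne_one
end
end
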